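/- (Algebraic consistency.) Let (i, j, k) be a permutation of (1, 2, 3) and let Φ = (φ₁, φ₂, φ₃) ∈ ℝ³ satisfy φ_i = 0, φ_j + φ_k = 1 and φ_j ∈ (−δ, 1+δ). Then the partial derivatives of W = W₀ ∘ P at Φ satisfy ∂_{φ_i}W(Φ) = 0 and ∂_{φ_j}W(Φ) = Σ_j·W_dw'(φ_j). In particular, the chemical potential of an absent phase vanishes, and on a binary edge the remaining potential reduces to the scaled double-well derivative. -/

import Mathlib

/-- The cutoff function ℓ. -/
noncomputable def ell (x : ℝ) : ℝ := if x < 0 then x ^ 2 / (1 + x) else 0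

/-- The double-well potential. -/
noncomputable def Wdw (δ φ : ℝ) : ℝ :=
  18 * φ ^ 2 * (1 - φ) ^ 2 + δ * ell (φ / δ) + δ * ell ((1 - φ) / δ)

/-- Σ_T = (Σ₁⁻¹ + Σ₂⁻¹ + Σ₃⁻¹)⁻¹. -/
noncomputable def SigT (S : Fin 3 → ℝ) : ℝ := ((S 0)⁻¹ + (S 1)⁻¹ + (S 2)⁻¹)⁻¹

/-- The projection P(Φ) = Φ + Σ_T(1 − φ₁ − φ₂ − φ₃)(Σ₁⁻¹, Σ₂⁻¹, Σ₃⁻¹). -/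
noncomputable def Pproj (S : Fin 3 → ℝ) (Φ : Fin 3 → ℝ) : Fin 3 → ℝ :=
  fun m => Φ m + SigT S * (1 - (Φ 0 + Φ 1 + Φ 2)) * (S m)⁻¹

/-- The triple-well potential W₀(Ψ) = Σ₁W_dw(ψ₁) + Σ₂W_dw(ψ₂) + Σ₃W_dw(ψ₃). -/
noncomputable def W0 (δ : ℝ) (S : Fin 3 → ℝ) (Ψ : Fin 3 → ℝ) : ℝ :=
  S 0 * Wdw δ (Ψ 0) + S 1 * Wdw δ (Ψ 1) + S 2 * Wdw δ (Ψ 2)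

/-- W(Φ) = W₀(P(Φ)). -/
noncomputable def Wtriple (δ : ℝ) (S : Fin 3 → ℝ) (Φ : Fin 3 → ℝ) : ℝ := W0 δ S (Pproj S Φ)

/-!
On the plane `φ₁ + φ₂ + φ₃ = 1` the projection `P` is the identity, and since its correction is
proportional to `Σ_m⁻¹` in the `m`-th component, the weights cancel in the chain rule:
`∂_{φ_i} W = Σ_i W_dw'(φ_i) - Σ_T ∑ m, W_dw'(φ_m)`.
On a binary edge the last sum vanishes: `0` minimizes `W_dw`, so `W_dw'(φ_i) = 0`, and the symmetry
`W_dw(1 - x) = W_dw(x)` makes the contributions of `φ_j` and `φ_k = 1 - φ_j` opposite.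
-/

theorem hasDerivAt_ite_lt {F : Type*} [NormedAddCommGroup F] [NormedSpace ℝ F] {f g : ℝ → F}
    {f' : F} {a : ℝ} (hf : HasDerivWithinAt f f' (Set.Iic a) a)
    (hg : HasDerivWithinAt g f' (Set.Ici a) a) (hfg : f a = g a) :
    HasDerivAt (fun x => if x < a then f x else g x) f' a := by
  have hleft : HasDerivWithinAt (fun x => if x < a then f x else g x) f' (Set.Iic a) a := by
    refine hf.congr_of_mem (fun x hx => ?_) Set.self_mem_Iic
    rcases (Set.mem_Iic.1 hx).lt_or_eq with hlt | rfl
    · exact if_pos hlt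
    · rw [if_neg (lt_irrefl x), hfg]
  have hright : HasDerivWithinAt (fun x => if x < a then f x else g x) f' (Set.Ici a) a :=
    hg.congr_of_mem (fun x hx => if_neg (Set.mem_Ici.1 hx).not_gt) Set.self_mem_Ici
  simpa only [Set.Iic_union_Ici, hasDerivWithinAt_univ] using hleft.union hright

theorem univ_eq_insert_pair_of_card_eq_three {ι : Type*} [Fintype ι] [DecidableEq ι] {i j k : ι}
    (hι : Fintype.card ι = 3) (hij : i ≠ j) (hik : i ≠ k) (hjk : j ≠ k) :
    (Finset.univ : Finset ι) = {i, j, k} := by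
  refine (Finset.eq_univ_of_card _ ?_).symm
  rw [hι, Finset.card_eq_three]
  exact ⟨i, j, k, hij, hik, hjk, rfl⟩

theorem sum_univ_of_card_eq_three {ι M : Type*} [Fintype ι] [AddCommMonoid M] {i j k : ι}
    (hι : Fintype.card ι = 3) (hij : i ≠ j) (hik : i ≠ k) (hjk : j ≠ k) (f : ι → M) :
    ∑ m, f m = f i + (f j + f k) := by
  classical
  rw [univ_eq_insert_pair_of_card_eq_three hι hij hik hjk,
    Finset.sum_insert (by simp [hij, hik]), Finset.sum_pair hjk]

theorem forall_of_card_eq_three {ι : Type*} [Fintype ι] {i j k : ι} {p : ι → Prop}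
    (hι : Fintype.card ι = 3) (hij : i ≠ j) (hik : i ≠ k) (hjk : j ≠ k)
    (hi : p i) (hj : p j) (hk : p k) (m : ι) : p m := by
  classical
  have hm : m ∈ ({i, j, k} : Finset ι) :=
    univ_eq_insert_pair_of_card_eq_three hι hij hik hjk ▸ Finset.mem_univ m
  simp only [Finset.mem_insert, Finset.mem_singleton] at hm
  rcases hm with rfl | rfl | rfl <;> assumption

section ObliqueShift

/-- The oblique shift of `Φ` along `w` by `T` times the defect `1 - ∑ n, Φ n`: the projection `P`
for any number of phases, with an arbitrary direction `w` in place of `(Σ_m⁻¹)` and an arbitrary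
factor `T` in place of `Σ_T`. -/
def obliqueShift {R ι : Type*} [Ring R] [Fintype ι] (T : R) (w Φ : ι → R) : ι → R :=
  fun m => Φ m + T * (1 - ∑ n, Φ n) * w m

theorem obliqueShift_of_sum_eq_one {R ι : Type*} [Ring R] [Fintype ι] (T : R) (w : ι → R)
    {Φ : ι → R} (hΦ : ∑ m, Φ m = 1) : obliqueShift T w Φ = Φ := by
  funext m
  rw [obliqueShift, hΦ, sub_self, mul_zero, zero_mul, add_zero]

variable {𝕜 ι : Type*} [NontriviallyNormedField 𝕜] [Fintype ι] [DecidableEq ι]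

theorem hasDerivAt_obliqueShift_update (T : 𝕜) (w Φ : ι → 𝕜) (i m : ι) (x : 𝕜) :
    HasDerivAt (fun t => obliqueShift T w (Function.update Φ i t) m)
      ((Pi.single i 1 : ι → 𝕜) m - T * w m) x := by
  have hcoord : ∀ n, HasDerivAt (fun t => Function.update Φ i t n) ((Pi.single i 1 : ι → 𝕜) n) x :=
    hasDerivAt_pi.1 (hasDerivAt_update Φ i x)
  have htotal : HasDerivAt (fun t => ∑ n, Function.update Φ i t n) 1 x := by
    simpa only [Finset.sum_pi_single', Finset.mem_univ, if_true] using
      HasDerivAt.fun_sum fun n (_ : n ∈ Finset.univ) => hcoord n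
  exact ((hcoord m).add (((htotal.const_sub 1).const_mul T).mul_const (w m))).congr_deriv (by ring)

theorem hasDerivAt_sum_mul_comp_obliqueShift_update {S Φ f' : ι → 𝕜} {f : ι → 𝕜 → 𝕜}
    (hS : ∀ m, S m ≠ 0) (hΦ : ∑ m, Φ m = 1) (hf : ∀ m, HasDerivAt (f m) (f' m) (Φ m))
    (T : 𝕜) (i : ι) :
    HasDerivAt (fun t => ∑ m, S m * f m (obliqueShift T S⁻¹ (Function.update Φ i t) m))
      (S i * f' i - T * ∑ m, f' m) (Φ i) := by
  have hterm : ∀ m, HasDerivAt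
      (fun t => S m * f m (obliqueShift T S⁻¹ (Function.update Φ i t) m))
      (S m * (f' m * ((Pi.single i 1 : ι → 𝕜) m - T * (S m)⁻¹))) (Φ i) := fun m => by
    refine HasDerivAt.const_mul (S m)
      ((hf m).comp_of_eq (Φ i) (hasDerivAt_obliqueShift_update T S⁻¹ Φ i m (Φ i)) ?_)
    rw [Function.update_eq_self, obliqueShift_of_sum_eq_one T S⁻¹ hΦ]
  refine (HasDerivAt.fun_sum fun m _ => hterm m).congr_deriv ?_
  calc ∑ m, S m * (f' m * ((Pi.single i 1 : ι → 𝕜) m - T * (S m)⁻¹))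
      = ∑ m, (S m * f' m * (Pi.single i 1 : ι → 𝕜) m - T * f' m) :=
        Finset.sum_congr rfl fun m _ => by field_simp [hS m]
    _ = S i * f' i - T * ∑ m, f' m := by
        simp [Finset.sum_sub_distrib, Finset.mul_sum, Pi.single_apply]

end ObliqueShift

theorem ell_of_neg {x : ℝ} (hx : x < 0) : ell x = x ^ 2 / (1 + x) := if_pos hx

theorem ell_of_nonneg {x : ℝ} (hx : 0 ≤ x) : ell x = 0 := if_neg hx.not_gt

theorem ell_nonneg {x : ℝ} (hx : -1 < x) : 0 ≤ ell x := by
  rcases lt_or_ge x 0 with hneg | hpos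
  · rw [ell_of_neg hneg]
    exact div_nonneg (sq_nonneg x) (by linarith)
  · exact (ell_of_nonneg hpos).ge

theorem hasDerivAt_ell_zero : HasDerivAt ell 0 0 := by
  have hquot : HasDerivAt (fun x : ℝ => x ^ 2 / (1 + x)) 0 0 := by
    simpa using (hasDerivAt_pow 2 (0 : ℝ)).fun_div ((hasDerivAt_id' (0 : ℝ)).const_add 1) (by simp)
  exact hasDerivAt_ite_lt hquot.hasDerivWithinAt (hasDerivWithinAt_const _ _ _) (by simp)

theorem differentiableAt_ell {x : ℝ} (hx : -1 < x) : DifferentiableAt ℝ ell x := by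
  rcases lt_trichotomy x 0 with hneg | rfl | hpos
  · have hquot : DifferentiableAt ℝ (fun y : ℝ => y ^ 2 / (1 + y)) x := by
      have : 1 + x ≠ 0 := by linarith
      fun_prop (disch := assumption)
    exact hquot.congr_of_eventuallyEq ((eventually_lt_nhds hneg).mono fun _ => ell_of_neg)
  · exact hasDerivAt_ell_zero.differentiableAt
  · exact (differentiableAt_const 0).congr_of_eventuallyEq
      ((eventually_gt_nhds hpos).mono fun _ hy => ell_of_nonneg (le_of_lt hy))

section DoubleWell

variable {δ x : ℝ}

theorem neg_one_lt_div_of_mem_Ioo (hδ : 0 < δ) (hx : x ∈ Set.Ioo (-δ) (1 + δ)) :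
    -1 < x / δ ∧ -1 < (1 - x) / δ := by
  rw [lt_div_iff₀ hδ, lt_div_iff₀ hδ]
  constructor <;> linarith [hx.1, hx.2]

theorem differentiableAt_Wdw (hδ : 0 < δ) (hx : x ∈ Set.Ioo (-δ) (1 + δ)) :
    DifferentiableAt ℝ (Wdw δ) x := by
  obtain ⟨hleft, hright⟩ := neg_one_lt_div_of_mem_Ioo hδ hx
  have hell_left : DifferentiableAt ℝ (fun y => ell (y / δ)) x :=
    (differentiableAt_ell hleft).fun_comp' x (by fun_prop)
  have hell_right : DifferentiableAt ℝ (fun y => ell ((1 - y) / δ)) x :=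
    (differentiableAt_ell hright).fun_comp' x (by fun_prop)
  unfold Wdw
  fun_prop

theorem Wdw_nonneg (hδ : 0 < δ) (hx : x ∈ Set.Ioo (-δ) (1 + δ)) : 0 ≤ Wdw δ x := by
  obtain ⟨hleft, hright⟩ := neg_one_lt_div_of_mem_Ioo hδ hx
  have hell_left := ell_nonneg hleft
  have hell_right := ell_nonneg hright
  unfold Wdw
  positivity

theorem Wdw_zero (hδ : 0 ≤ δ) : Wdw δ 0 = 0 := by
  simp [Wdw, ell_of_nonneg, hδ]

theorem deriv_Wdw_zero (hδ : 0 < δ) : deriv (Wdw δ) 0 = 0 := by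
  have hmin : IsLocalMin (Wdw δ) 0 := by
    filter_upwards [Ioo_mem_nhds (neg_lt_zero.2 hδ) (by positivity : 0 < 1 + δ)] with y hy
    simpa only [Wdw_zero hδ.le] using Wdw_nonneg hδ hy
  exact hmin.deriv_eq_zero

end DoubleWell

theorem Wdw_one_sub (δ x : ℝ) : Wdw δ (1 - x) = Wdw δ x := by
  unfold Wdw
  rw [sub_sub_cancel]
  ring

theorem deriv_Wdw_one_sub (δ x : ℝ) : deriv (Wdw δ) (1 - x) = -deriv (Wdw δ) x := by
  rw [← neg_eq_iff_eq_neg, ← deriv_comp_const_sub]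
  simp only [Wdw_one_sub]

theorem Wtriple_eq_sum_obliqueShift (δ : ℝ) (S Φ : Fin 3 → ℝ) :
    Wtriple δ S Φ = ∑ m, S m * Wdw δ (obliqueShift (SigT S) S⁻¹ Φ m) := by
  simp only [Wtriple, W0, Pproj, obliqueShift, Pi.inv_apply, Fin.sum_univ_three]

theorem hasDerivAt_Wtriple_update {δ : ℝ} {S Φ : Fin 3 → ℝ} (hS : ∀ m, S m ≠ 0)
    (hΦ : ∑ m, Φ m = 1) (hW : ∀ m, DifferentiableAt ℝ (Wdw δ) (Φ m)) (i : Fin 3) :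
    HasDerivAt (fun t => Wtriple δ S (Function.update Φ i t))
      (S i * deriv (Wdw δ) (Φ i) - SigT S * ∑ m, deriv (Wdw δ) (Φ m)) (Φ i) := by
  simp only [Wtriple_eq_sum_obliqueShift]
  exact hasDerivAt_sum_mul_comp_obliqueShift_update hS hΦ (fun m => (hW m).hasDerivAt) (SigT S) i

theorem Wtriple_algebraic_consistency_general {δ : ℝ} (hδ : 0 < δ)
    {S : Fin 3 → ℝ} (hS : ∀ m, S m ≠ 0) (_hT : (S 0)⁻¹ + (S 1)⁻¹ + (S 2)⁻¹ ≠ 0)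
    {i j k : Fin 3} (hij : i ≠ j) (hik : i ≠ k) (hjk : j ≠ k)
    {Φ : Fin 3 → ℝ} (hi : Φ i = 0) (hsum : Φ j + Φ k = 1) (hmem : Φ j ∈ Set.Ioo (-δ) (1 + δ)) :
    HasDerivAt (fun t => Wtriple δ S (Function.update Φ i t)) 0 (Φ i) ∧
    HasDerivAt (fun t => Wtriple δ S (Function.update Φ j t))
      (S j * deriv (Wdw δ) (Φ j)) (Φ j) := by
  have hk : Φ k = 1 - Φ j := by linarith
  have hsum_univ : ∀ f : Fin 3 → ℝ, ∑ m, f m = f i + (f j + f k) :=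
    sum_univ_of_card_eq_three (Fintype.card_fin 3) hij hik hjk
  have hΦ : ∑ m, Φ m = 1 := by rw [hsum_univ, hi, hsum, zero_add]
  have hW : ∀ m, DifferentiableAt ℝ (Wdw δ) (Φ m) := by
    refine forall_of_card_eq_three (Fintype.card_fin 3) hij hik hjk ?_ ?_ ?_ <;>
      refine differentiableAt_Wdw hδ ?_ <;> constructor <;> linarith [hmem.1, hmem.2]
  have hderiv_i : deriv (Wdw δ) (Φ i) = 0 := by rw [hi, deriv_Wdw_zero hδ]
  have hderiv_sum : ∑ m, deriv (Wdw δ) (Φ m) = 0 := by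
    rw [hsum_univ, hderiv_i, hk, deriv_Wdw_one_sub, add_neg_cancel, zero_add]
  have hpartial := hasDerivAt_Wtriple_update hS hΦ hW
  constructor
  · simpa only [hderiv_i, hderiv_sum, mul_zero, sub_zero] using hpartial i
  · simpa only [hderiv_sum, mul_zero, sub_zero] using hpartial j

/-- algebraic consistency: if phase i is absent and φ_j + φ_k = 1, then
∂_{φ_i}W(Φ) = 0 and ∂_{φ_j}W(Φ) = Σ_j·W_dw'(φ_j). -/
theorem Wtriple_algebraic_consistency (δ : ℝ) (hδ : δ ∈ Set.Ioo (0 : ℝ) (1 / 2))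
    (S : Fin 3 → ℝ) (hS : ∀ m, 0 < S m)
    (i j k : Fin 3) (hij : i ≠ j) (hik : i ≠ k) (hjk : j ≠ k)
    (Φ : Fin 3 → ℝ) (hi : Φ i = 0) (hsum : Φ j + Φ k = 1)
    (hmem : Φ j ∈ Set.Ioo (-δ) (1 + δ)) :
    HasDerivAt (fun t => Wtriple δ S (Function.update Φ i t)) 0 (Φ i) ∧
    HasDerivAt (fun t => Wtriple δ S (Function.update Φ j t))
      (S j * deriv (Wdw δ) (Φ j)) (Φ j) := by
  have hinv := fun m => inv_pos.2 (hS m)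
  exact Wtriple_algebraic_consistency_general hδ.1 (fun m => (hS m).ne')
    (add_pos (add_pos (hinv 0) (hinv 1)) (hinv 2)).ne' hij hik hjk hi hsum hmem
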